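/- Let m ≥ 3 be an integer with an odd factor, let a_1,…,a_m ∈ T = {t·(cos φ, sin φ) : t ≥ 0, φ ∈ (0,π]} ⊂ ℝ², and suppose A = [a_1,…,a_m]ᵀ satisfies β_A = inf{β_M : M ∈ ℝ^{m×2}} (an optimal frame). Then there exist c > 0, φ ∈ ℝ, a permutation σ of {1,…,m}, and ε = (ε_1,…,ε_m) ∈ {±1}^m with ∑_{j=1}^m ε_j·e^{ijπ/m} = 0, such that f(a_{σ(j)}) = c·ε_j·(cos(2φ + jπ/m), sin(2φ + jπ/m)) for every j; equivalently, after a common rescaling and a common rotation, {a_1,…,a_m} = {ν_j : ε_j = 1} ∪ {ν_j^⊥ : ε_j = −1}, where ν_j = (cos(jπ/(2m)), sin(jπ/(2m))) and ν_j^⊥ = (cos(jπ/(2m) + π/2), sin(jπ/(2m) + π/2)). -/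

import Mathlib

noncomputable section

open Real
open scoped RealInnerProductSpace ENNReal

/-- ℝ² as a Euclidean space. -/
abbrev E2 : Type := EuclideanSpace ℝ (Fin 2)

/-- The vector `(x, y)` in ℝ². -/
def vec2 (x y : ℝ) : E2 := (WithLp.equiv 2 (Fin 2 → ℝ)).symm ![x, y]

/-- The coordinates of a vector in ℝ². -/
def toFun2 (v : E2) : Fin 2 → ℝ := WithLp.equiv 2 (Fin 2 → ℝ) v

/-- The phaseless measurement map `Φ_A(x) = (|⟨a_j, x⟩|)_j`. -/
def PhiMap {m : ℕ} (a : Fin m → E2) (x : E2) : EuclideanSpace ℝ (Fin m) :=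
  (WithLp.equiv 2 (Fin m → ℝ)).symm fun j => |⟪a j, x⟫|

/-- The distance `dist(x,y) = min ‖x − y‖ ‖x + y‖` (real phase retrieval distance). -/
def pdist (x y : E2) : ℝ := min ‖x - y‖ ‖x + y‖

/-- The set of Lipschitz ratios of the phaseless measurement map. -/
def ratioSet {m : ℕ} (a : Fin m → E2) : Set ℝ :=
  {r | ∃ x y : E2, pdist x y ≠ 0 ∧ r = ‖PhiMap a x - PhiMap a y‖ / pdist x y}

/-- The optimal lower Lipschitz constant `L_A`. -/
def lipL {m : ℕ} (a : Fin m → E2) : ℝ := sInf (ratioSet a)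

/-- The optimal upper Lipschitz constant `U_A`. -/
def lipU {m : ℕ} (a : Fin m → E2) : ℝ := sSup (ratioSet a)

/-- The condition number `β_A = U_A / L_A`, with `β_A = +∞` when `L_A = 0`. -/
def condNum {m : ℕ} (a : Fin m → E2) : ℝ≥0∞ :=
  if lipL a = 0 then ⊤ else ENNReal.ofReal (lipU a / lipL a)

/-- An edge family: nonzero vectors with pairwise distinct directions summing to zero
(the edge vectors of a strictly convex polygon). -/
def IsEdgeFamily {m : ℕ} (e : Fin m → E2) : Prop :=
  (∀ j, e j ≠ 0) ∧
  (∀ i j : Fin m, i ≠ j → ‖e i‖⁻¹ • e i ≠ ‖e j‖⁻¹ • e j) ∧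
  ∑ j, e j = 0

/-- The diameter-to-perimeter ratio of the polygon with edge vectors `e`. -/
def rRatio {m : ℕ} (e : Fin m → E2) : ℝ :=
  sSup {s | ∃ u : E2, ‖u‖ = 1 ∧ s = ∑ j, |⟪e j, u⟫|} / (2 * ∑ j, ‖e j‖)

/-- An optimal edge family: minimizes `rRatio` among all edge families of size `m`. -/
def IsOptimalEdgeFamily {m : ℕ} (e : Fin m → E2) : Prop :=
  IsEdgeFamily e ∧ ∀ e' : Fin m → E2, IsEdgeFamily e' → rRatio e ≤ rRatio e'

/-- The complex square map on ℝ² ≅ ℂ: `f(t·(cos φ, sin φ)) = t²·(cos 2φ, sin 2φ)`. -/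
def csq (v : E2) : E2 :=
  vec2 (toFun2 v 0 ^ 2 - toFun2 v 1 ^ 2) (2 * toFun2 v 0 * toFun2 v 1)

/-- The harmonic frame `E_m`: the `j`-th row is `(cos((j−1)π/m), sin((j−1)π/m))`, `j = 1,…,m`. -/
def harmonicFrame (m : ℕ) : Fin m → E2 :=
  fun j => vec2 (Real.cos ((j : ℕ) * π / m)) (Real.sin ((j : ℕ) * π / m))


/-- Signed version of the support function. -/
def Dfun (m : ℕ) (r θ : ℕ → ℝ) (k : ℕ) (φ : ℝ) : ℝ :=
  ∑ j ∈ Finset.range m, (if j < k then (-1:ℝ) else 1) * (r j * Real.cos (θ j - φ))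

lemma Dfun_le (m : ℕ) (r θ : ℕ → ℝ) (hr : ∀ k < m, 0 ≤ r k) (k : ℕ) (φ : ℝ) :
    Dfun m r θ k φ ≤ ∑ j ∈ Finset.range m, r j * |Real.cos (θ j - φ)| := by
  unfold Dfun
  apply Finset.sum_le_sum
  intro j hj
  have h := hr j (Finset.mem_range.mp hj)
  split_ifs
  · nlinarith [neg_abs_le (Real.cos (θ j - φ))]
  · nlinarith [le_abs_self (Real.cos (θ j - φ))]

lemma inner_tele (m : ℕ) (θ : ℕ → ℝ) (hend : θ m = θ 0 + π) (j : ℕ) (hj : j < m) :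
    ∑ k ∈ Finset.range m, Real.sin ((θ (k+1) - θ k)/2) *
      ((if j < k+1 then (-1:ℝ) else 1) * Real.cos (θ j - ((θ k + θ (k+1))/2 + π/2))) = 1 := by
  have key : ∀ k, 2 * (Real.sin ((θ (k+1) - θ k)/2) * Real.cos (θ j - ((θ k + θ (k+1))/2 + π/2)))
      = Real.cos (θ j - θ (k+1)) - Real.cos (θ j - θ k) := by
    intro k
    have e1 : Real.cos (θ j - ((θ k + θ (k+1))/2 + π/2)) = Real.sin (θ j - (θ k + θ (k+1))/2) := by
      rw [← Real.cos_sub_pi_div_two]; congr 1; ring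
    have e2 : θ j - θ (k+1) = (θ j - (θ k + θ (k+1))/2) - (θ (k+1) - θ k)/2 := by ring
    have e3 : θ j - θ k = (θ j - (θ k + θ (k+1))/2) + (θ (k+1) - θ k)/2 := by ring
    rw [e1, e2, e3, Real.cos_sub, Real.cos_add]; ring
  have h2 : ∀ n, n ≤ j → 2 * ∑ k ∈ Finset.range n, Real.sin ((θ (k+1) - θ k)/2) *
      ((if j < k+1 then (-1:ℝ) else 1) * Real.cos (θ j - ((θ k + θ (k+1))/2 + π/2)))
      = Real.cos (θ j - θ n) - Real.cos (θ j - θ 0) := by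
    intro n
    induction n with
    | zero => intro _; simp
    | succ n ih =>
      intro hn
      rw [Finset.sum_range_succ, mul_add, ih (by omega), if_neg (by omega), one_mul, key]; ring
  have h3 : ∀ n, 2 * ∑ k ∈ Finset.range (j+n), Real.sin ((θ (k+1) - θ k)/2) *
      ((if j < k+1 then (-1:ℝ) else 1) * Real.cos (θ j - ((θ k + θ (k+1))/2 + π/2)))
      = 2 - Real.cos (θ j - θ (j+n)) - Real.cos (θ j - θ 0) := by
    intro n
    induction n with
    | zero => rw [add_zero, h2 j le_rfl]; simp; ring
    | succ n ih =>
      rw [← add_assoc, Finset.sum_range_succ, mul_add, ih, if_pos (by omega)]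
      have := key (j+n)
      linear_combination -this
  have h4 := h3 (m - j)
  rw [show j + (m - j) = m by omega, hend] at h4
  have e5 : Real.cos (θ j - (θ 0 + π)) = - Real.cos (θ j - θ 0) := by
    rw [← sub_sub, Real.cos_sub_pi]
  rw [e5] at h4
  linarith

lemma D_identity (m : ℕ) (r θ : ℕ → ℝ) (hend : θ m = θ 0 + π) :
    ∑ k ∈ Finset.range m, Real.sin ((θ (k+1) - θ k)/2) *
      Dfun m r θ (k+1) ((θ k + θ (k+1))/2 + π/2) = ∑ j ∈ Finset.range m, r j := by
  unfold Dfun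
  simp_rw [Finset.mul_sum]
  rw [Finset.sum_comm]
  apply Finset.sum_congr rfl
  intro j hj
  have := inner_tele m θ hend j (Finset.mem_range.mp hj)
  calc _ = r j * ∑ k ∈ Finset.range m, Real.sin ((θ (k+1) - θ k)/2) *
      ((if j < k+1 then (-1:ℝ) else 1) * Real.cos (θ j - ((θ k + θ (k+1))/2 + π/2))) := by
        rw [Finset.mul_sum]; apply Finset.sum_congr rfl; intro k _; ring
    _ = r j := by rw [this, mul_one]

/-- tangent line bound for sine -/
lemma sin_tangent {x x0 : ℝ} (hx : 0 ≤ x) (hx' : x ≤ π/2) (h0 : 0 < x0) (h0' : x0 < π/2) :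
    Real.sin x ≤ Real.sin x0 + Real.cos x0 * (x - x0) ∧
    (Real.sin x = Real.sin x0 + Real.cos x0 * (x - x0) → x = x0) := by
  have hpi := Real.pi_pos
  have hs0 : 0 < Real.sin x0 := Real.sin_pos_of_pos_of_lt_pi h0 (by linarith)
  have hc0 : 0 < Real.cos x0 := Real.cos_pos_of_mem_Ioo ⟨by linarith, h0'⟩
  have e : Real.sin x = Real.sin x0 * Real.cos (x - x0) + Real.cos x0 * Real.sin (x - x0) := by
    rw [← Real.sin_add]; congr 1; ring
  have hstrict : x ≠ x0 → Real.sin x < Real.sin x0 + Real.cos x0 * (x - x0) := by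
    intro hne
    rcases lt_or_gt_of_ne hne with h | h
    · -- x < x0
      have := strictConcaveOn_sin_Icc.lt_slope_of_hasDerivAt (x := x) (y := x0)
        ⟨hx, by linarith⟩ ⟨h0.le, by linarith⟩ h (Real.hasDerivAt_sin x0)
      rw [slope_def_field, lt_div_iff₀ (by linarith)] at this
      linarith
    · have h1 := Real.sin_lt (sub_pos.mpr h)
      have h2 := Real.cos_le_one (x - x0)
      nlinarith
  constructor
  · by_cases h : x = x0
    · subst h; simp
    · exact (hstrict h).le
  · intro h; by_contra hne; exact absurd h (hstrict hne).ne

lemma Dfun_eq (m : ℕ) (r θ : ℕ → ℝ) (k : ℕ) : ∃ X Y : ℝ, ∀ φ,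
    Dfun m r θ k φ = X * Real.cos φ + Y * Real.sin φ := by
  refine ⟨∑ j ∈ Finset.range m, (if j < k then (-1:ℝ) else 1) * (r j * Real.cos (θ j)),
    ∑ j ∈ Finset.range m, (if j < k then (-1:ℝ) else 1) * (r j * Real.sin (θ j)), fun φ => ?_⟩
  unfold Dfun
  rw [Finset.sum_mul, Finset.sum_mul, ← Finset.sum_add_distrib]
  apply Finset.sum_congr rfl
  intro j _
  rw [Real.cos_sub]; ring

lemma trig_max {X Y R φ0 : ℝ} (h : ∀ φ, X * Real.cos φ + Y * Real.sin φ ≤ R)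
    (h0 : X * Real.cos φ0 + Y * Real.sin φ0 = R) (ψ : ℝ) :
    X * Real.cos ψ + Y * Real.sin ψ = R * Real.cos (ψ - φ0) := by
  set W := Y * Real.cos φ0 - X * Real.sin φ0 with hW
  have hexp : ∀ d, X * Real.cos (φ0 + d) + Y * Real.sin (φ0 + d) = R * Real.cos d + W * Real.sin d := by
    intro d; rw [Real.cos_add, Real.sin_add, ← h0, hW]; ring
  have hnorm : R ^ 2 + W ^ 2 ≤ R ^ 2 := by
    have hz := Complex.norm_mul_cos_arg (⟨R, W⟩ : ℂ)
    have hz' := Complex.norm_mul_sin_arg (⟨R, W⟩ : ℂ)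
    have h1 := h (φ0 + Complex.arg ⟨R, W⟩)
    rw [hexp] at h1
    have hsq : ‖(⟨R, W⟩ : ℂ)‖ ^ 2 = R ^ 2 + W ^ 2 := by
      rw [← Complex.normSq_eq_norm_sq, Complex.normSq_mk]; ring
    simp only at hz hz'
    set N := ‖(⟨R, W⟩ : ℂ)‖
    have hN : 0 ≤ N := norm_nonneg _
    set c := Real.cos (Complex.arg ⟨R, W⟩)
    set s := Real.sin (Complex.arg ⟨R, W⟩)
    have hcs : c ^ 2 + s ^ 2 = 1 := Real.cos_sq_add_sin_sq _
    have : N ≤ R := by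
      calc N = N * (c^2 + s^2) := by rw [hcs, mul_one]
        _ = R * c + W * s := by rw [← hz, ← hz']; ring
        _ ≤ R := h1
    nlinarith
  have hW0 : W = 0 := by nlinarith [sq_nonneg W]
  have := hexp (ψ - φ0)
  rw [hW0, show φ0 + (ψ - φ0) = ψ by ring] at this
  linarith

lemma iso_bound (m : ℕ) (hm : 2 ≤ m) (r θ : ℕ → ℝ) (hr : ∀ k < m, 0 ≤ r k)
    (hmono : ∀ k < m, θ k ≤ θ (k+1)) (hend : θ m = θ 0 + π) (R : ℝ)
    (hG : ∀ φ, ∑ j ∈ Finset.range m, r j * |Real.cos (θ j - φ)| ≤ R) :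
    ∑ j ∈ Finset.range m, r j ≤ R * (m * Real.sin (π / (2 * m))) ∧
    (0 < R → ∑ j ∈ Finset.range m, r j = R * (m * Real.sin (π / (2 * m))) →
      ∀ k < m, θ k = θ 0 + k * π / m ∧ r k = R * Real.sin (π / (2 * m))) := by
  have hpi := Real.pi_pos
  have hm' : (2:ℝ) ≤ m := by exact_mod_cast hm
  have hR : 0 ≤ R := le_trans (Finset.sum_nonneg fun j hj =>
    mul_nonneg (hr j (Finset.mem_range.mp hj)) (abs_nonneg _)) (hG 0)
  set x0 := π / (2 * m) with hx0
  have hx0p : 0 < x0 := by positivity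
  have hx0l : x0 < π / 2 := by
    rw [hx0]; apply div_lt_div_of_pos_left hpi (by norm_num) (by linarith)
  have hle0 : ∀ n, n ≤ m → θ 0 ≤ θ n := by
    intro n
    induction n with
    | zero => intro _; exact le_rfl
    | succ n ih => intro h; exact (ih (by omega)).trans (hmono n (by omega))
  have hlem : ∀ n, n ≤ m → θ (m - n) ≥ θ 0 + π - 0 - (θ m - θ (m - n)) := by
    intro n _; linarith
  have hle1 : ∀ n, n ≤ m → θ (m - n) ≤ θ m := by
    intro n
    induction n with
    | zero => intro _; exact le_rfl
    | succ n ih =>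
      intro h
      have := hmono (m - (n+1)) (by omega)
      rw [show m - (n+1) + 1 = m - n by omega] at this
      exact this.trans (ih (by omega))
  have hle2 : ∀ n, n ≤ m → θ n ≤ θ m := by
    intro n hn
    have := hle1 (m - n) (by omega)
    rwa [show m - (m - n) = n by omega] at this
  set y : ℕ → ℝ := fun k => (θ (k+1) - θ k)/2 with hy
  have hy0 : ∀ k < m, 0 ≤ y k := fun k hk => by
    have := hmono k hk
    simp only [hy]; linarith
  have hy1 : ∀ k < m, y k ≤ π / 2 := fun k hk => by
    have h1 := hle0 k hk.le
    have h2 := hle2 (k+1) hk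
    simp only [hy]; linarith
  have hysum : ∑ k ∈ Finset.range m, y k = π / 2 := by
    simp only [hy]
    rw [← Finset.sum_div, Finset.sum_range_sub, hend]; ring
  have htan : ∑ k ∈ Finset.range m, (Real.sin x0 + Real.cos x0 * (y k - x0)) = m * Real.sin x0 := by
    rw [Finset.sum_add_distrib, ← Finset.mul_sum, Finset.sum_sub_distrib, hysum]
    simp only [Finset.sum_const, Finset.card_range, nsmul_eq_mul]
    have : (m:ℝ) * x0 = π / 2 := by rw [hx0]; field_simp
    rw [this]; ring
  have hT : ∀ k ∈ Finset.range m, Real.sin (y k) ≤ Real.sin x0 + Real.cos x0 * (y k - x0) :=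
    fun k hk => (sin_tangent (hy0 k (Finset.mem_range.mp hk)) (hy1 k (Finset.mem_range.mp hk)) hx0p hx0l).1
  have hsins : ∑ k ∈ Finset.range m, Real.sin (y k) ≤ m * Real.sin x0 := by
    rw [← htan]; exact Finset.sum_le_sum hT
  have hid := D_identity m r θ hend
  have hD : ∀ k φ, Dfun m r θ k φ ≤ R := fun k φ => (Dfun_le m r θ hr k φ).trans (hG φ)
  have hsn : ∀ k < m, 0 ≤ Real.sin (y k) := fun k hk =>
    Real.sin_nonneg_of_nonneg_of_le_pi (hy0 k hk) (by linarith [hy1 k hk])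
  have hstep : ∀ k ∈ Finset.range m, Real.sin (y k) * Dfun m r θ (k+1) ((θ k + θ (k+1))/2 + π/2)
      ≤ Real.sin (y k) * R := fun k hk =>
    mul_le_mul_of_nonneg_left (hD _ _) (hsn k (Finset.mem_range.mp hk))
  have hs1 : ∑ j ∈ Finset.range m, r j ≤ (∑ k ∈ Finset.range m, Real.sin (y k)) * R := by
    rw [← hid, Finset.sum_mul]; exact Finset.sum_le_sum hstep
  refine ⟨hs1.trans (by rw [mul_comm]; exact mul_le_mul_of_nonneg_left hsins hR), ?_⟩
  intro hRp hEq
  have hsinEq : ∑ k ∈ Finset.range m, Real.sin (y k) = m * Real.sin x0 := by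
    apply le_antisymm hsins
    rw [hEq, mul_comm R] at hs1
    exact le_of_mul_le_mul_right hs1 hRp
  have hyeq : ∀ k < m, y k = x0 := by
    intro k hk
    have := (Finset.sum_eq_sum_iff_of_le hT).mp (by rw [htan, hsinEq]) k (Finset.mem_range.mpr hk)
    exact (sin_tangent (hy0 k hk) (hy1 k hk) hx0p hx0l).2 this
  have hs0 : 0 < Real.sin x0 := Real.sin_pos_of_pos_of_lt_pi hx0p (by linarith)
  have hDeq : ∀ k < m, Dfun m r θ (k+1) ((θ k + θ (k+1))/2 + π/2) = R := by
    intro k hk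
    have := (Finset.sum_eq_sum_iff_of_le hstep).mp (by
      rw [← Finset.sum_mul, hsinEq, mul_comm _ R, ← hEq]; exact hid) k (Finset.mem_range.mpr hk)
    rw [hyeq k hk] at this
    exact mul_left_cancel₀ hs0.ne' this
  have hstepθ : ∀ k < m, θ (k+1) = θ k + 2 * x0 := by
    intro k hk; have := hyeq k hk; simp only [hy] at this; linarith
  have hθ : ∀ k, k ≤ m → θ k = θ 0 + k * (2 * x0) := by
    intro k
    induction k with
    | zero => intro _; simp
    | succ k ih => intro h; rw [hstepθ k (by omega), ih (by omega)]; push_cast; ring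
  have hDall : ∀ k < m, ∀ ψ, Dfun m r θ (k+1) ψ = R * Real.cos (ψ - ((θ k + θ (k+1))/2 + π/2)) := by
    intro k hk ψ
    obtain ⟨X, Y, hXY⟩ := Dfun_eq m r θ (k+1)
    rw [hXY]
    apply trig_max
    · intro φ; rw [← hXY]; exact hD _ _
    · rw [← hXY]; exact hDeq k hk
  have hDdiff : ∀ k < m, ∀ ψ, Dfun m r θ k ψ - Dfun m r θ (k+1) ψ = 2 * (r k * Real.cos (θ k - ψ)) := by
    intro k hk ψ
    unfold Dfun
    rw [← Finset.sum_sub_distrib, Finset.sum_eq_single k]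
    · simp; ring
    · intro j _ hjk
      by_cases h : j < k
      · rw [if_pos h, if_pos (by omega)]; ring
      · rw [if_neg h, if_neg (by omega)]; ring
    · intro h; exact absurd (Finset.mem_range.mpr hk) h
  have hrk : ∀ k, k + 1 < m → r (k+1) = R * Real.sin x0 := by
    intro k hk
    have h1 := hDdiff (k+1) hk (θ (k+1))
    rw [hDall k (by omega), hDall (k+1) hk, hstepθ (k+1) hk, hstepθ k (by omega)] at h1
    rw [sub_self, Real.cos_zero] at h1
    have e1 : θ k + 2 * x0 - ((θ k + (θ k + 2 * x0)) / 2 + π / 2) = x0 - π / 2 := by ring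
    have e2 : θ k + 2 * x0 - ((θ k + 2 * x0 + (θ k + 2 * x0 + 2 * x0)) / 2 + π / 2) = - x0 - π / 2 := by ring
    rw [e1, e2, Real.cos_sub_pi_div_two, Real.cos_sub_pi_div_two, Real.sin_neg] at h1
    linarith
  have hr0 : r 0 = R * Real.sin x0 := by
    obtain ⟨n, rfl⟩ : ∃ n, m = n + 1 := ⟨m - 1, by omega⟩
    rw [Finset.sum_range_succ', Finset.sum_congr rfl (fun k hk => hrk k (by
      have := Finset.mem_range.mp hk; omega))] at hEq
    simp only [Finset.sum_const, Finset.card_range, nsmul_eq_mul] at hEq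
    push_cast at hEq
    linarith
  intro k hk
  constructor
  · rw [hθ k hk.le, hx0]; field_simp
  · cases k with
    | zero => exact hr0
    | succ k => exact hrk k hk

lemma integral_abs_cos (a : ℝ) : ∫ x in a..(a + π), |Real.cos x| = 2 := by
  have hp : Function.Periodic (fun x => |Real.cos x|) π := by
    intro x; simp [Real.cos_add_pi]
  rw [hp.intervalIntegral_add_eq a (-(π/2))]
  have : ∫ x in (-(π/2))..(-(π/2) + π), |Real.cos x| = ∫ x in (-(π/2))..(-(π/2) + π), Real.cos x := by
    apply intervalIntegral.integral_congr
    intro x hx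
    rw [Set.uIcc_of_le (by linarith [Real.pi_pos])] at hx
    exact abs_of_nonneg (Real.cos_nonneg_of_mem_Icc ⟨hx.1, by linarith [hx.2]⟩)
  rw [this, integral_cos, show -(π/2) + π = π/2 by ring, Real.sin_neg, Real.sin_pi_div_two]
  norm_num

lemma sum_abs_cos_le (m : ℕ) (hm : 2 ≤ m) (φ : ℝ) :
    Real.sin (π / (2 * m)) * ∑ j ∈ Finset.range m, |Real.cos (j * π / m - φ)| ≤ 1 := by
  have hpi := Real.pi_pos
  have hm' : (2:ℝ) ≤ m := by exact_mod_cast hm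
  have hs : 0 ≤ Real.sin (π / (2 * m)) := by
    apply Real.sin_nonneg_of_nonneg_of_le_pi (by positivity)
    exact div_le_self hpi.le (by linarith)
  set z : ℕ → ℝ := fun j => j * π / m - φ - π / (2 * m) with hz
  have hzs : ∀ j : ℕ, z (j+1) = j * π / m - φ + π / (2 * m) := by
    intro j; simp only [hz]; push_cast; field_simp; ring
  have hintg : ∀ j < m, IntervalIntegrable (fun x => |Real.cos x|) MeasureTheory.volume (z j) (z (j+1)) :=
    fun j _ => (Real.continuous_cos.abs).intervalIntegrable _ _
  have key : ∀ j : ℕ, 2 * (Real.sin (π / (2 * m)) * |Real.cos (j * π / m - φ)|) ≤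
      ∫ x in (z j)..(z (j+1)), |Real.cos x| := by
    intro j
    have hle : z j ≤ z (j+1) := by
      rw [hzs]; simp only [hz]; have : 0 ≤ π / (2 * m) := by positivity
      linarith
    have h1 := intervalIntegral.norm_integral_le_integral_norm (f := Real.cos)
      (μ := MeasureTheory.volume) hle
    rw [integral_cos, Real.norm_eq_abs] at h1
    refine le_trans (le_of_eq ?_) h1
    rw [hzs]; simp only [hz]
    generalize π / (2 * (m:ℝ)) = w at hs ⊢
    generalize (j:ℝ) * π / m - φ = v
    have e : Real.sin (v + w) - Real.sin (v - w) = 2 * (Real.sin w * Real.cos v) := by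
      rw [Real.sin_add, Real.sin_sub]; ring
    rw [e, abs_mul, abs_mul, abs_two, abs_of_nonneg hs]
  have hsum := intervalIntegral.sum_integral_adjacent_intervals (n := m) hintg
  have hend : z m = z 0 + π := by simp only [hz]; push_cast; field_simp; ring
  rw [hend, integral_abs_cos] at hsum
  have := Finset.sum_le_sum (s := Finset.range m) (fun j _ => key j)
  rw [hsum, ← Finset.mul_sum, ← Finset.mul_sum] at this
  linarith

lemma sum_range_mul_aux (f : ℕ → ℝ) (l K : ℕ) :
    ∑ j ∈ Finset.range (l * K), f j = ∑ s ∈ Finset.range l, ∑ q ∈ Finset.range K, f (l * q + s) := by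
  rw [Finset.sum_comm]
  induction K with
  | zero => simp
  | succ K ih => rw [Nat.mul_succ, Finset.sum_range_add, ih, Finset.sum_range_succ]

lemma sum_cos_arith (k : ℕ) (hk : Odd k) (hk1 : 1 < k) (y : ℝ) :
    ∑ q ∈ Finset.range k, Real.cos (y + q * (π / k + π)) = 0 := by
  have hpi := Real.pi_pos
  have hk' : (1:ℝ) < k := by exact_mod_cast hk1
  set γ := π / k + π with hγ
  have hlt : π / k < π := div_lt_self hpi hk'
  have hpos : 0 < π / k := by positivity
  have hs : 0 < Real.sin (γ/2) :=
    Real.sin_pos_of_pos_of_lt_pi (by linarith) (by linarith)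
  have h : ∀ n : ℕ, 2 * Real.sin (γ/2) * ∑ q ∈ Finset.range n, Real.cos (y + q * γ)
      = Real.sin (y + n * γ - γ/2) - Real.sin (y - γ/2) := by
    intro n
    induction n with
    | zero => simp
    | succ n ih =>
      rw [Finset.sum_range_succ, mul_add, ih]
      rw [show y + ((n+1:ℕ):ℝ) * γ - γ/2 = (y + n * γ) + γ/2 by push_cast; ring, Real.sin_add,
        Real.sin_sub (y + n * γ)]
      ring
  have hkk := h k
  obtain ⟨n, hn⟩ := hk
  have hkγ : (k:ℝ) * γ = ((n+1:ℕ):ℝ) * (2 * π) := by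
    rw [hγ, mul_add, mul_div_cancel₀ _ (by linarith : (k:ℝ) ≠ 0), hn]; push_cast; ring
  rw [hkγ, show y + ((n+1:ℕ):ℝ) * (2 * π) - γ/2 = (y - γ/2) + ((n+1:ℕ):ℝ) * (2 * π) by ring,
    Real.sin_add_nat_mul_two_pi, sub_self] at hkk
  rcases mul_eq_zero.mp hkk with h0 | h0
  · exact absurd h0 (by positivity)
  · exact h0

lemma exists_signs (m : ℕ) (hm : 2 ≤ m) (hodd : ∃ k, Odd k ∧ 1 < k ∧ k ∣ m) :
    ∃ A : ℕ → ℝ, (∀ j, ∃ n : ℕ, A j = j * π / m + n * π) ∧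
      ∀ x, ∑ j ∈ Finset.range m, Real.cos (A j - x) = 0 := by
  obtain ⟨k, hk, hk1, l, rfl⟩ := hodd
  have hl : 0 < l := by
    rcases Nat.eq_zero_or_pos l with h | h
    · subst h; simp at hm
    · exact h
  refine ⟨fun j => j * π / ((k * l : ℕ) : ℝ) + ((j / l : ℕ) : ℝ) * π, fun j => ⟨j / l, rfl⟩, fun x => ?_⟩
  rw [show Finset.range (k * l) = Finset.range (l * k) by rw [mul_comm], sum_range_mul_aux]
  apply Finset.sum_eq_zero
  intro s hs
  have hs' := Finset.mem_range.mp hs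
  rw [← sum_cos_arith k hk hk1 (s * π / ((k * l : ℕ) : ℝ) - x)]
  apply Finset.sum_congr rfl
  intro q _
  congr 1
  have : (l * q + s) / l = q := by
    rw [Nat.mul_add_div hl, Nat.div_eq_of_lt hs', add_zero]
  beta_reduce
  rw [this]
  have hl0 : (l:ℝ) ≠ 0 := by positivity
  have hk0 : (k:ℝ) ≠ 0 := by have : 0 < k := by omega
                             positivity
  push_cast
  field_simp
  ring

lemma inner_vec2 (t s p q : ℝ) : ⟪t • vec2 (Real.cos p) (Real.sin p), s • vec2 (Real.cos q) (Real.sin q)⟫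
    = t * s * Real.cos (p - q) := by
  rw [inner_smul_left, inner_smul_right]
  simp [vec2, PiLp.inner_apply, Fin.sum_univ_two, Real.cos_sub]
  ring

lemma norm_vec2 (q : ℝ) : ‖vec2 (Real.cos q) (Real.sin q)‖ = 1 := by
  rw [EuclideanSpace.norm_eq]
  simp [vec2, Fin.sum_univ_two]

lemma exists_polar (u : E2) : ∃ α : ℝ, u = ‖u‖ • vec2 (Real.cos α) (Real.sin α) := by
  refine ⟨Complex.arg ⟨u 0, u 1⟩, ?_⟩
  have hn : ‖u‖ = ‖(⟨u 0, u 1⟩ : ℂ)‖ := by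
    rw [EuclideanSpace.norm_eq, Complex.norm_def, Complex.normSq_mk]
    simp [Fin.sum_univ_two, pow_two]
  rw [hn]
  ext i
  fin_cases i
  · simp [vec2]
  · simp [vec2]

lemma Phi_norm_sq {m : ℕ} (a : Fin m → E2) (x y : E2) :
    ‖PhiMap a x - PhiMap a y‖ ^ 2 = ∑ j, min (⟪a j, x - y⟫ ^ 2) (⟪a j, x + y⟫ ^ 2) := by
  rw [EuclideanSpace.real_norm_sq_eq]
  apply Finset.sum_congr rfl
  intro j _
  rw [inner_sub_right, inner_add_right]
  simp only [PhiMap, WithLp.equiv_symm_apply, PiLp.sub_apply]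
  generalize ⟪a j, x⟫ = p
  generalize ⟪a j, y⟫ = q
  have e : (|p| - |q|) ^ 2 = p ^ 2 + q ^ 2 - 2 * |p * q| := by
    rw [sub_sq, sq_abs, sq_abs, abs_mul]; ring
  rw [e]
  rcases le_total 0 (p * q) with h | h
  · rw [abs_of_nonneg h, min_eq_left (by nlinarith)]; ring
  · rw [abs_of_nonpos h, min_eq_right (by nlinarith)]; ring

lemma pdist_pos {x y : E2} (h : pdist x y ≠ 0) : 0 < pdist x y :=
  lt_of_le_of_ne (le_min (norm_nonneg _) (norm_nonneg _)) (Ne.symm h)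

lemma ratio_nonneg {m : ℕ} {a : Fin m → E2} {r : ℝ} (hr : r ∈ ratioSet a) : 0 ≤ r := by
  obtain ⟨x, y, h, rfl⟩ := hr
  exact div_nonneg (norm_nonneg _) (pdist_pos h).le

/-- upper bound on ratios from an upper frame bound -/
lemma ratio_le {m : ℕ} (a : Fin m → E2) (C : ℝ)
    (hC : ∀ w : E2, ∑ j, ⟪a j, w⟫ ^ 2 ≤ C * ‖w‖ ^ 2) {r : ℝ} (hr : r ∈ ratioSet a) : r ^ 2 ≤ C := by
  obtain ⟨x, y, h, rfl⟩ := hr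
  have hp := pdist_pos h
  rw [div_pow, div_le_iff₀ (by positivity), Phi_norm_sq]
  rcases min_choice ‖x - y‖ ‖x + y‖ with hc | hc
  · unfold pdist; rw [hc]
    exact (Finset.sum_le_sum fun j _ => min_le_left _ _).trans (hC _)
  · unfold pdist; rw [hc]
    exact (Finset.sum_le_sum fun j _ => min_le_right _ _).trans (hC _)

lemma ratio_bdd {m : ℕ} (a : Fin m → E2) : BddAbove (ratioSet a) := by
  have hC : ∀ w : E2, ∑ j, ⟪a j, w⟫ ^ 2 ≤ (∑ j, ‖a j‖ ^ 2) * ‖w‖ ^ 2 := by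
    intro w
    rw [Finset.sum_mul]
    apply Finset.sum_le_sum
    intro j _
    rw [← mul_pow]
    exact sq_le_sq' (by linarith [neg_abs_le ⟪a j, w⟫, abs_real_inner_le_norm (a j) w])
      (real_inner_le_norm _ _)
  refine ⟨Real.sqrt (∑ j, ‖a j‖ ^ 2), fun r hr => ?_⟩
  exact Real.le_sqrt_of_sq_le (ratio_le a _ hC hr)

lemma cos_sq_half (x : ℝ) : Real.cos x ^ 2 = (1 + Real.cos (2 * x)) / 2 := by
  rw [Real.cos_two_mul]; ring

lemma pdist_zero_right (x : E2) : pdist x 0 = ‖x‖ := by simp [pdist]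

/-- lower bound of `U`. -/
lemma lipU_ge {m : ℕ} (a : Fin m → E2) (t φ : Fin m → ℝ)
    (ha : ∀ j, a j = t j • vec2 (Real.cos (φ j)) (Real.sin (φ j))) (β : ℝ) :
    0 ≤ lipU a ∧ ∑ j, t j ^ 2 * ((1 + Real.cos (2 * φ j - β)) / 2) ≤ lipU a ^ 2 := by
  set u := vec2 (Real.cos (β/2)) (Real.sin (β/2)) with hu
  have hmem : ‖PhiMap a u - PhiMap a 0‖ / pdist u 0 ∈ ratioSet a := by
    refine ⟨u, 0, ?_, rfl⟩
    rw [pdist_zero_right, hu, norm_vec2]; norm_num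
  have hle := le_csSup (ratio_bdd a) hmem
  have h0 := ratio_nonneg hmem
  refine ⟨h0.trans hle, ?_⟩
  have := pow_le_pow_left₀ h0 hle 2
  refine le_trans (le_of_eq ?_) this
  rw [pdist_zero_right, hu, norm_vec2, div_one, Phi_norm_sq]
  apply Finset.sum_congr rfl
  intro j _
  have hi := inner_vec2 (t j) 1 (φ j) (β/2)
  rw [one_smul] at hi
  rw [sub_zero, add_zero, min_self, ha, hi, mul_one, mul_pow, cos_sq_half]
  congr 4; ring

/-- upper bound of `L`. -/
lemma lipL_le {m : ℕ} (a : Fin m → E2) (t φ : Fin m → ℝ)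
    (ha : ∀ j, a j = t j • vec2 (Real.cos (φ j)) (Real.sin (φ j))) (α : ℝ) :
    0 ≤ lipL a ∧ lipL a ^ 2 ≤ ∑ j, t j ^ 2 * ((1 - |Real.cos (2 * φ j - α)|) / 2) := by
  set u := vec2 (Real.cos (α/2)) (Real.sin (α/2)) with hu
  set v := vec2 (Real.cos (α/2 + π/2)) (Real.sin (α/2 + π/2)) with hv
  set x := (1/2:ℝ) • (u + v) with hx
  set y := (1/2:ℝ) • (v - u) with hy
  have e1 : x - y = u := by rw [hx, hy]; module
  have e2 : x + y = v := by rw [hx, hy]; module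
  have hpd : pdist x y = 1 := by
    unfold pdist; rw [e1, e2, hu, hv, norm_vec2, norm_vec2, min_self]
  have hmem : ‖PhiMap a x - PhiMap a y‖ / pdist x y ∈ ratioSet a := by
    refine ⟨x, y, ?_, rfl⟩
    rw [hpd]; norm_num
  have hL0 : 0 ≤ lipL a := Real.sInf_nonneg fun r hr => ratio_nonneg hr
  refine ⟨hL0, ?_⟩
  have hle : lipL a ≤ _ := csInf_le ⟨0, fun r hr => ratio_nonneg hr⟩ hmem
  have := pow_le_pow_left₀ hL0 hle 2
  refine le_trans this (le_of_eq ?_)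
  rw [hpd, div_one, Phi_norm_sq, e1, e2]
  apply Finset.sum_congr rfl
  intro j _
  have hi := inner_vec2 (t j) 1 (φ j) (α/2)
  have hi' := inner_vec2 (t j) 1 (φ j) (α/2 + π/2)
  rw [one_smul] at hi hi'
  rw [ha, hi, hi', mul_one, mul_pow, mul_pow, cos_sq_half, cos_sq_half]
  rw [show 2 * (φ j - (α/2 + π/2)) = (2 * φ j - α) - π by ring, Real.cos_sub_pi,
    show 2 * (φ j - α/2) = 2 * φ j - α by ring]
  rw [← mul_min_of_nonneg _ _ (sq_nonneg _)]
  congr 1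
  rcases le_total 0 (Real.cos (2 * φ j - α)) with h | h
  · rw [abs_of_nonneg h, min_eq_right (by linarith)]; ring
  · rw [abs_of_nonpos h, min_eq_left (by linarith)]; ring

lemma min_cos_ge (A p q : ℝ) :
    min ((1 + Real.cos (A - p)) / 2) ((1 + Real.cos (A - q)) / 2) ≥
      (1 + (Real.cos (A - p) + Real.cos (A - q)) / 2) / 2 - |Real.cos (A - ((p + q)/2 + π/2))| / 2 := by
  have e1 : Real.cos (A - p) - Real.cos (A - q) =
      -2 * Real.sin (A - (p+q)/2) * Real.sin ((q - p)/2) := by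
    have h1 : A - p = (A - (p+q)/2) + (q-p)/2 := by ring
    have h2 : A - q = (A - (p+q)/2) - (q-p)/2 := by ring
    rw [h1, h2]
    generalize A - (p+q)/2 = X
    generalize (q-p)/2 = Y
    rw [Real.cos_add, Real.cos_sub]; ring
  have e2 : Real.cos (A - ((p + q)/2 + π/2)) = Real.sin (A - (p+q)/2) := by
    rw [← Real.cos_sub_pi_div_two]; congr 1; ring
  rw [e2]
  have hab : |Real.cos (A - p) - Real.cos (A - q)| ≤ 2 * |Real.sin (A - (p+q)/2)| := by
    rw [e1, abs_mul, abs_mul, abs_neg, abs_two]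
    exact mul_le_of_le_one_right (by positivity) (Real.abs_sin_le_one _)
  have := abs_le.mp hab
  apply le_min <;> linarith

lemma ms_gt_one (m : ℕ) (hm : 2 ≤ m) : 1 < m * Real.sin (π / (2 * m)) := by
  have hpi := Real.pi_pos
  have hm' : (2:ℝ) ≤ m := by exact_mod_cast hm
  have h := Real.mul_lt_sin (x := π / (2 * m)) (by positivity)
    (div_lt_div_of_pos_left hpi (by norm_num) (by linarith))
  have e : 2 / π * (π / (2 * m)) = 1 / m := by field_simp
  rw [e, div_lt_iff₀ (by linarith)] at h
  linarith

lemma ratio_nonempty {m : ℕ} (a : Fin m → E2) : (ratioSet a).Nonempty := by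
  refine ⟨_, vec2 (Real.cos 0) (Real.sin 0), 0, ?_, rfl⟩
  rw [pdist_zero_right, norm_vec2]; norm_num

lemma condNum_good (m : ℕ) (hm : 2 ≤ m) (hodd : ∃ k, Odd k ∧ 1 < k ∧ k ∣ m) :
    ∃ M : Fin m → E2, 0 < lipL M ∧ 0 ≤ lipU M ∧ lipU M ^ 2 ≤ m / 2 ∧
      (m - 1 / Real.sin (π / (2 * m))) / 2 ≤ lipL M ^ 2 := by
  obtain ⟨A, hA, hA0⟩ := exists_signs m hm hodd
  have hm' : (2:ℝ) ≤ m := by exact_mod_cast hm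
  have hms := ms_gt_one m hm
  have hs : 0 < Real.sin (π / (2 * m)) := by
    by_contra h
    push Not at h
    nlinarith
  set s := Real.sin (π / (2 * m)) with hsdef
  have hA0' : ∀ x, ∑ j : Fin m, Real.cos (A j - x) = 0 := fun x => by
    rw [← hA0 x, Finset.sum_range]
  have hG : ∀ x, ∑ j : Fin m, |Real.cos (A j - x)| ≤ 1 / s := fun x => by
    rw [le_div_iff₀ hs, mul_comm]
    refine le_trans (le_of_eq ?_) (sum_abs_cos_le m hm x)
    rw [← hsdef, Finset.sum_range]
    congr 1
    apply Finset.sum_congr rfl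
    intro j _
    obtain ⟨n, hn⟩ := hA j
    rw [hn, show (j:ℕ) * π / m + n * π - x = ((j:ℕ) * π / m - x) + n * π by ring,
      Real.cos_add_nat_mul_pi, abs_mul]
    simp
  set M : Fin m → E2 := fun j => vec2 (Real.cos (A j / 2)) (Real.sin (A j / 2)) with hM
  have hin : ∀ j (w : ℝ) (α : ℝ), ⟪M j, w • vec2 (Real.cos α) (Real.sin α)⟫ ^ 2 =
      w ^ 2 * ((1 + Real.cos (A j - 2 * α)) / 2) := by
    intro j w α
    have hi := inner_vec2 1 w (A j / 2) α
    rw [one_smul] at hi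
    rw [hM]
    beta_reduce
    rw [hi, one_mul, mul_pow, cos_sq_half]
    congr 4; ring
  have hκ : 0 < (m - 1 / s) / 2 := by
    have : 1 / s < m := by rw [div_lt_iff₀ hs]; exact hms
    linarith
  have hLs : Real.sqrt ((m - 1 / s) / 2) ≤ lipL M := by
    apply le_csInf (ratio_nonempty M)
    rintro r hr
    have hr0 := ratio_nonneg hr
    rw [Real.sqrt_le_left hr0]
    obtain ⟨x, y, h, rfl⟩ := hr
    have hp := pdist_pos h
    rw [div_pow, le_div_iff₀ (by positivity), Phi_norm_sq]
    obtain ⟨α, hα⟩ := exists_polar (x - y)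
    obtain ⟨β, hβ⟩ := exists_polar (x + y)
    have hd1 : pdist x y ^ 2 ≤ ‖x - y‖ ^ 2 := pow_le_pow_left₀ hp.le (min_le_left _ _) 2
    have hd2 : pdist x y ^ 2 ≤ ‖x + y‖ ^ 2 := pow_le_pow_left₀ hp.le (min_le_right _ _) 2
    have hstep : ∀ j : Fin m, pdist x y ^ 2 * ((1 + (Real.cos (A j - 2 * α) + Real.cos (A j - 2 * β)) / 2) / 2
        - |Real.cos (A j - ((2 * α + 2 * β)/2 + π/2))| / 2) ≤ min (⟪M j, x - y⟫ ^ 2) (⟪M j, x + y⟫ ^ 2) := by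
      intro j
      rw [hα, hβ, hin, hin]
      refine (mul_le_mul_of_nonneg_left (min_cos_ge (A j) (2 * α) (2 * β)) (sq_nonneg _)).trans ?_
      rw [mul_min_of_nonneg _ _ (sq_nonneg _)]
      have c1 := Real.neg_one_le_cos (A j - 2 * α)
      have c2 := Real.neg_one_le_cos (A j - 2 * β)
      apply min_le_min
      · exact mul_le_mul_of_nonneg_right hd1 (by linarith)
      · exact mul_le_mul_of_nonneg_right hd2 (by linarith)
    refine le_trans ?_ (Finset.sum_le_sum fun j _ => hstep j)
    rw [← Finset.mul_sum, mul_comm]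
    apply mul_le_mul_of_nonneg_left _ (sq_nonneg _)
    rw [Finset.sum_sub_distrib, ← Finset.sum_div, ← Finset.sum_div, Finset.sum_add_distrib,
      ← Finset.sum_div, Finset.sum_add_distrib, hA0', hA0']
    simp only [Finset.sum_const, Finset.card_univ, Fintype.card_fin, nsmul_eq_mul]
    have := hG ((2 * α + 2 * β)/2 + π/2)
    linarith
  have hU0 : 0 ≤ lipU M := Real.sSup_nonneg fun r hr => ratio_nonneg hr
  have hUs : lipU M ≤ Real.sqrt (m / 2) := by
    apply Real.sSup_le _ (Real.sqrt_nonneg _)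
    intro r hr
    apply Real.le_sqrt_of_sq_le
    apply ratio_le M _ _ hr
    intro w
    obtain ⟨α, hα⟩ := exists_polar w
    have : ∀ j, ⟪M j, w⟫ ^ 2 = ‖w‖ ^ 2 * ((1 + Real.cos (A j - 2 * α)) / 2) := by
      intro j
      rw [← hin, ← hα]
    rw [Finset.sum_congr rfl fun j _ => this j, ← Finset.mul_sum, ← Finset.sum_div,
      Finset.sum_add_distrib, hA0']
    simp only [Finset.sum_const, Finset.card_univ, Fintype.card_fin, nsmul_eq_mul]
    apply le_of_eq; ring
  refine ⟨M, (Real.sqrt_pos.mpr hκ).trans_le hLs, hU0, ?_, ?_⟩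
  · have := pow_le_pow_left₀ hU0 hUs 2
    rwa [Real.sq_sqrt (by positivity)] at this
  · have := pow_le_pow_left₀ (Real.sqrt_nonneg _) hLs 2
    rwa [Real.sq_sqrt hκ.le] at this

/-- The basic inequality satisfied by an optimal frame. -/
lemma opt_ineq {m : ℕ} (hm : 2 ≤ m) (hodd : ∃ k, Odd k ∧ 1 < k ∧ k ∣ m)
    (a : Fin m → E2) (hopt : condNum a = ⨅ M : Fin m → E2, condNum M)
    (t φ : Fin m → ℝ)
    (ha : ∀ j, a j = t j • vec2 (Real.cos (φ j)) (Real.sin (φ j))) :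
    0 < ∑ j, t j ^ 2 ∧ ∀ α β,
    (∑ j, t j ^ 2 + ∑ j, t j ^ 2 * Real.cos (2 * φ j - β)) * (m * Real.sin (π / (2 * m)) - 1) ≤
      (m * Real.sin (π / (2 * m))) *
        (∑ j, t j ^ 2 - ∑ j, t j ^ 2 * |Real.cos (2 * φ j - α)|) := by
  obtain ⟨M, hL, hU, hU2, hL2⟩ := condNum_good m hm hodd
  have hms := ms_gt_one m hm
  have hm' : (2:ℝ) ≤ m := by exact_mod_cast hm
  have hs : 0 < Real.sin (π / (2 * m)) := by
    by_contra h
    push Not at h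
    nlinarith
  set s := Real.sin (π / (2 * m)) with hsdef
  have hle : condNum a ≤ condNum M := hopt ▸ iInf_le _ M
  have haL : lipL a ≠ 0 := by
    intro h
    unfold condNum at hle
    rw [if_pos h, if_neg hL.ne', top_le_iff] at hle
    exact ENNReal.ofReal_ne_top hle
  unfold condNum at hle
  rw [if_neg haL, if_neg hL.ne', ENNReal.ofReal_le_ofReal_iff (by positivity)] at hle
  have hL0 := (lipL_le a t φ ha 0).1
  have haLp : 0 < lipL a := lt_of_le_of_ne hL0 (Ne.symm haL)
  have haU0 := (lipU_ge a t φ ha 0).1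
  rw [div_le_div_iff₀ haLp hL] at hle
  have hsq := pow_le_pow_left₀ (by positivity) hle 2
  rw [mul_pow, mul_pow] at hsq
  -- `U_a² (ms - 1) ≤ ms L_a²`
  have hmain : lipU a ^ 2 * (m * s - 1) ≤ (m * s) * lipL a ^ 2 := by
    have h1 : lipU a ^ 2 * ((m - 1 / s) / 2) ≤ m / 2 * lipL a ^ 2 :=
      (mul_le_mul_of_nonneg_left hL2 (sq_nonneg _)).trans
        (hsq.trans (mul_le_mul_of_nonneg_right hU2 (sq_nonneg _)))
    have h2 := mul_le_mul_of_nonneg_left h1 (by positivity : 0 ≤ 2 * s)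
    have e : 2 * s * (lipU a ^ 2 * ((m - 1 / s) / 2)) = lipU a ^ 2 * (m * s - 1) := by
      field_simp
    rw [e] at h2
    linarith
  have hsumL : ∀ α, ∑ j, t j ^ 2 * ((1 - |Real.cos (2 * φ j - α)|) / 2) =
      (∑ j, t j ^ 2 - ∑ j, t j ^ 2 * |Real.cos (2 * φ j - α)|) / 2 := by
    intro α
    rw [← Finset.sum_sub_distrib, Finset.sum_div]
    apply Finset.sum_congr rfl; intro j _; ring
  have hsumU : ∀ β, ∑ j, t j ^ 2 * ((1 + Real.cos (2 * φ j - β)) / 2) =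
      (∑ j, t j ^ 2 + ∑ j, t j ^ 2 * Real.cos (2 * φ j - β)) / 2 := by
    intro α
    rw [← Finset.sum_add_distrib, Finset.sum_div]
    apply Finset.sum_congr rfl; intro j _; ring
  constructor
  · have h := (lipL_le a t φ ha 0).2
    rw [hsumL] at h
    have h3 : 0 ≤ ∑ j, t j ^ 2 * |Real.cos (2 * φ j - 0)| :=
      Finset.sum_nonneg fun j _ => by positivity
    have : 0 < lipL a ^ 2 := by positivity
    linarith
  · intro α β
    have h1 := (lipL_le a t φ ha α).2
    have h2 := (lipU_ge a t φ ha β).2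
    rw [hsumL] at h1
    rw [hsumU] at h2
    have h3 := mul_le_mul_of_nonneg_right h2 (by linarith : 0 ≤ m * s - 1)
    have h4 := mul_le_mul_of_nonneg_left h1 (by positivity : 0 ≤ m * s)
    linarith

/-- If `m ≥ 3` has an odd factor and `a_1,…,a_m` lie in the upper
half-plane `T` and form an optimal frame, then there are `c > 0`, `φ ∈ ℝ`, a permutation
`σ`, and signs `ε ∈ {±1}^m` with `∑ ε_j e^{ijπ/m} = 0` such that
`f(a_{σ(j)}) = c·ε_j·(cos(2φ + jπ/m), sin(2φ + jπ/m))` for all `j`. -/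
theorem stmt17 {m : ℕ} (hm : 3 ≤ m) (hodd : ∃ k, Odd k ∧ 1 < k ∧ k ∣ m)
    (a : Fin m → E2)
    (hT : ∀ j, ∃ t φ : ℝ, 0 ≤ t ∧ 0 < φ ∧ φ ≤ π ∧
      a j = t • vec2 (Real.cos φ) (Real.sin φ))
    (hopt : condNum a = ⨅ M : Fin m → E2, condNum M) :
    ∃ c : ℝ, 0 < c ∧ ∃ φ : ℝ, ∃ σ : Equiv.Perm (Fin m), ∃ ε : Fin m → ℝ,
      (∀ j, ε j = 1 ∨ ε j = -1) ∧
      (∑ j : Fin m, (ε j : ℂ) * Complex.exp (π * Complex.I / m) ^ ((j : ℕ) + 1) = 0) ∧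
      ∀ j : Fin m, csq (a (σ j)) =
        (c * ε j) • vec2 (Real.cos (2 * φ + ((j : ℕ) + 1) * π / m))
          (Real.sin (2 * φ + ((j : ℕ) + 1) * π / m)) := by
  have hm2 : 2 ≤ m := by omega
  have hm0 : 0 < m := by omega
  have hpi := Real.pi_pos
  choose t φ ht hφ0 hφ1 ha using hT
  obtain ⟨hP, hineq⟩ := opt_ineq hm2 hodd a hopt t φ ha
  have hms := ms_gt_one m hm2
  have hm' : (2:ℝ) ≤ m := by exact_mod_cast hm2
  have hs : 0 < Real.sin (π / (2 * m)) := by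
    by_contra h
    push Not at h
    nlinarith
  set s := Real.sin (π / (2 * m)) with hsdef
  set P := ∑ j, t j ^ 2 with hPdef
  -- reduce angles modulo `π`
  set θ' : Fin m → ℝ := fun j => toIcoMod hpi 0 (2 * φ j) with hθ'
  set n : Fin m → ℤ := fun j => toIcoDiv hpi 0 (2 * φ j) with hn
  have hAθ : ∀ j, 2 * φ j = θ' j + n j * π := by
    intro j
    have := toIcoMod_add_toIcoDiv_zsmul hpi 0 (2 * φ j)
    rw [zsmul_eq_mul] at this
    exact this.symm
  have hθmem : ∀ j, 0 ≤ θ' j ∧ θ' j < π := by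
    intro j
    have := toIcoMod_mem_Ico hpi 0 (2 * φ j)
    rw [zero_add] at this
    exact this
  set η : Fin m → ℝ := fun j => (-1:ℝ) ^ (n j) with hη
  have hη1 : ∀ j, η j = 1 ∨ η j = -1 := fun j => by
    simp only [hη]
    rcases Int.even_or_odd (n j) with h | h
    · left; exact h.neg_one_zpow
    · right; exact h.neg_one_zpow
  have hcosA : ∀ j x, Real.cos (2 * φ j - x) = η j * Real.cos (θ' j - x) := by
    intro j x
    rw [hAθ, show θ' j + n j * π - x = (θ' j - x) + n j * π by ring, Real.cos_add_int_mul_pi]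
  have hsinA : ∀ j, Real.sin (2 * φ j) = η j * Real.sin (θ' j) := by
    intro j
    rw [hAθ, Real.sin_add_int_mul_pi]
  have habs : ∀ j x, |Real.cos (2 * φ j - x)| = |Real.cos (θ' j - x)| := by
    intro j x
    rw [hcosA, abs_mul]
    rcases hη1 j with h | h <;> rw [h] <;> simp
  set σ : Equiv.Perm (Fin m) := Tuple.sort θ' with hσ
  have hmonoσ : Monotone (θ' ∘ σ) := Tuple.monotone_sort θ'
  set r : ℕ → ℝ := fun k => if h : k < m then t (σ ⟨k, h⟩) ^ 2 else 0 with hr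
  set θ : ℕ → ℝ := fun k => if h : k < m then θ' (σ ⟨k, h⟩) else θ' (σ ⟨0, hm0⟩) + π with hθ
  have hr_fin : ∀ j : Fin m, r j = t (σ j) ^ 2 := fun j => by simp [hr]
  have hθ_fin : ∀ j : Fin m, θ j = θ' (σ j) := fun j => by simp [hθ]
  have hsumr : ∑ j ∈ Finset.range m, r j = P := by
    rw [Finset.sum_range, hPdef, ← Equiv.sum_comp σ (fun j => t j ^ 2)]
    exact Finset.sum_congr rfl fun j _ => hr_fin j
  have hsumG : ∀ x, ∑ j ∈ Finset.range m, r j * |Real.cos (θ j - x)| =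
      ∑ j, t j ^ 2 * |Real.cos (2 * φ j - x)| := by
    intro x
    rw [Finset.sum_range, ← Equiv.sum_comp σ (fun j => t j ^ 2 * |Real.cos (2 * φ j - x)|)]
    exact Finset.sum_congr rfl fun j _ => by rw [hr_fin, hθ_fin, habs]
  have hrn : ∀ k < m, 0 ≤ r k := fun k hk => by simp only [hr, dif_pos hk]; positivity
  have hθend : θ m = θ 0 + π := by simp [hθ, hm0]
  have hθmono : ∀ k < m, θ k ≤ θ (k+1) := by
    intro k hk
    by_cases hk' : k + 1 < m
    · simp only [hθ, dif_pos hk, dif_pos hk']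
      exact hmonoσ (by simp [Fin.le_def])
    · simp only [hθ, dif_pos hk, dif_neg hk']
      linarith [(hθmem (σ ⟨k, hk⟩)).2, (hθmem (σ ⟨0, hm0⟩)).1]
  set C : ℝ → ℝ := fun β => ∑ j, t j ^ 2 * Real.cos (2 * φ j - β) with hC
  have hmspos : 0 < m * s := by linarith
  have hGR : ∀ β x, ∑ j ∈ Finset.range m, r j * |Real.cos (θ j - x)| ≤
      P - (P + C β) * (m * s - 1) / (m * s) := by
    intro β x
    have h := hineq x β
    rw [hsumG]
    have : (P + C β) * (m * s - 1) / (m * s) ≤ P - ∑ j, t j ^ 2 * |Real.cos (2 * φ j - x)| := by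
      rw [div_le_iff₀ hmspos]; linarith
    linarith
  have hRms : ∀ β, (P - (P + C β) * (m * s - 1) / (m * s)) * (m * s) = P - C β * (m * s - 1) := by
    intro β
    rw [sub_mul, div_mul_cancel₀ _ hmspos.ne']; ring
  have hCle : ∀ β, C β ≤ 0 := by
    intro β
    have h := (iso_bound m hm2 r θ hrn hθmono hθend _ (hGR β)).1
    rw [← hsdef, hRms, hsumr] at h
    by_contra hc
    push Not at hc
    have := mul_pos hc (by linarith : 0 < m * s - 1)
    linarith
  have hC0 : ∀ β, C β = 0 := by
    intro β
    apply le_antisymm (hCle β)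
    have h := hCle (β + π)
    have e : C (β + π) = - C β := by
      simp only [hC]
      rw [← Finset.sum_neg_distrib]
      apply Finset.sum_congr rfl
      intro j _
      rw [← sub_sub, Real.cos_sub_pi]; ring
    linarith
  set R := P - (P + C 0) * (m * s - 1) / (m * s) with hR
  have hRP : R * (m * s) = P := by rw [hR, hRms, hC0]; ring
  have hRpos : 0 < R := by
    by_contra h
    push Not at h
    nlinarith
  have hfin := (iso_bound m hm2 r θ hrn hθmono hθend R (hGR 0)).2 hRpos (by
    rw [hsumr, ← hsdef, hRP])
  set c := R * s with hc
  have hcpos : 0 < c := mul_pos hRpos hs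
  have hθj : ∀ j : Fin m, θ' (σ j) = θ 0 + (j:ℕ) * π / m := fun j => by
    rw [← hθ_fin]; exact (hfin j j.2).1
  have htj : ∀ j : Fin m, t (σ j) ^ 2 = c := fun j => by
    rw [← hr_fin]; exact (hfin j j.2).2
  have hang : ∀ j : Fin m, 2 * ((θ 0 - π / m) / 2) + ((j:ℕ) + 1) * π / m = θ' (σ j) := by
    intro j; rw [hθj]; field_simp; ring
  have hcsum : ∀ x, ∑ j : Fin m, η (σ j) * Real.cos (θ' (σ j) - x) = 0 := by
    intro x
    have h := hC0 x
    simp only [hC] at h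
    rw [← Equiv.sum_comp σ] at h
    have e : ∀ j : Fin m, t (σ j) ^ 2 * Real.cos (2 * φ (σ j) - x) =
        c * (η (σ j) * Real.cos (θ' (σ j) - x)) := fun j => by rw [htj, hcosA]
    rw [Finset.sum_congr rfl fun j _ => e j, ← Finset.mul_sum] at h
    exact (mul_eq_zero.mp h).resolve_left hcpos.ne'
  refine ⟨c, hcpos, (θ 0 - π / m) / 2, σ, fun j => η (σ j), fun j => hη1 _, ?_, ?_⟩
  · have hexp : ∀ j : Fin m, ((η (σ j) : ℝ) : ℂ) * Complex.exp (π * Complex.I / m) ^ ((j : ℕ) + 1) =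
        ((η (σ j) * Real.cos (θ' (σ j) - (θ 0 - π / m)) : ℝ) : ℂ) +
        ((η (σ j) * Real.cos (θ' (σ j) - (θ 0 - π / m + π / 2)) : ℝ) : ℂ) * Complex.I := by
      intro j
      have e1 : Real.cos (θ' (σ j) - (θ 0 - π / m + π / 2)) =
          Real.sin (θ' (σ j) - (θ 0 - π / m)) := by
        rw [← Real.cos_sub_pi_div_two]; congr 1; ring
      have e2 : θ' (σ j) - (θ 0 - π / m) = ((j:ℕ) + 1) * π / m := by
        rw [hθj]; field_simp; ring
      rw [e1, e2, ← Complex.exp_nat_mul]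
      have e3 : (((j:ℕ) + 1 : ℕ) : ℂ) * (π * Complex.I / m) =
          ((((j:ℕ) + 1) * π / m : ℝ) : ℂ) * Complex.I := by
        push_cast; ring
      rw [e3, Complex.exp_mul_I, ← Complex.ofReal_cos, ← Complex.ofReal_sin]
      push_cast; ring
    rw [Finset.sum_congr rfl fun j _ => hexp j, Finset.sum_add_distrib, ← Finset.sum_mul,
      ← Complex.ofReal_sum, ← Complex.ofReal_sum, hcsum, hcsum]
    simp
  · intro j
    rw [hang]
    have h1 : Real.cos (2 * φ (σ j)) = η (σ j) * Real.cos (θ' (σ j)) := by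
      have := hcosA (σ j) 0
      simpa using this
    have h2 := hsinA (σ j)
    rw [Real.cos_two_mul'] at h1
    rw [Real.sin_two_mul] at h2
    rw [ha]
    ext i
    fin_cases i
    · simp [csq, vec2, toFun2]
      rw [← htj j]
      linear_combination t (σ j) ^ 2 * h1
    · simp [csq, vec2, toFun2]
      rw [← htj j]
      linear_combination t (σ j) ^ 2 * h2
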